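/- Let K be an algebraically closed field of characteristic 0, let ζ ∈ K be a primitive cube root of unity, let b, d, g ∈ K be nonzero with b·d·g ∉ {−1, 8}, and let F_{b,d,g} : K³ → K³ be the polynomial map F_{b,d,g}(X,Y,Z) = (X² + bYZ, Z² + dXY, Y² + gXZ). Then: (i) if d ≠ g, Aut(F_{b,d,g}) is exactly the cyclic subgroup of PGL₃(K) of order 3 generated by the class [diag(1, ζ, ζ²)]; (ii) if d = g, Aut(F_{b,d,g}) is exactly the subgroup of order 6 generated by [diag(1, ζ, ζ²)] and the class of the permutation matrix exchanging the second and third standard basis vectors, a group isomorphic to S₃; (iii) for b', d', g' ∈ K nonzero with b'·d'·g' ∉ {−1, 8}, the triples F_{b,d,g} and F_{b',d',g'} are PGL₃(K)-conjugate if and only if (b',d',g') = (b,d,g) or (b',d',g') = (b,g,d). -/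

import Mathlib

open Matrix MvPolynomial
open scoped Classical

noncomputable section

/-- `PGL₃(K)`: the quotient of `GL₃(K)` by its center (the nonzero scalar matrices). -/
abbrev PGL3 (K : Type*) [Field K] : Type _ :=
  GL (Fin 3) K ⧸ Subgroup.center (GL (Fin 3) K)

/-- The class in `PGL₃(K)` of a matrix (sent to `1` if the matrix is not invertible). -/
def toPGL3 {K : Type*} [Field K] (M : Matrix (Fin 3) (Fin 3) K) : PGL3 K :=
  if h : M.det ≠ 0 then
    QuotientGroup.mk (Matrix.GeneralLinearGroup.mkOfDetNeZero M h) else 1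

/-- The automorphism group (as a set of classes in `PGL₃(K)`) of a polynomial self-map
`F` of `K³`: the classes `[M]` such that `F(M·v) = c·M·F(v)` for some `c ≠ 0` and all `v`. -/
def AutQ {K : Type*} [Field K] (F : (Fin 3 → K) → (Fin 3 → K)) : Set (PGL3 K) :=
  {φ | ∃ M : GL (Fin 3) K, (QuotientGroup.mk M : PGL3 K) = φ ∧
    ∃ c : K, c ≠ 0 ∧ ∀ v : Fin 3 → K,
      F ((M : Matrix (Fin 3) (Fin 3) K) *ᵥ v) = c • ((M : Matrix (Fin 3) (Fin 3) K) *ᵥ F v)}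

/-- Two polynomial self-maps of `K³` are `PGL₃(K)`-conjugate. -/
def PGLConj {K : Type*} [Field K] (F F' : (Fin 3 → K) → (Fin 3 → K)) : Prop :=
  ∃ (M : Matrix (Fin 3) (Fin 3) K) (c : K), M.det ≠ 0 ∧ c ≠ 0 ∧
    ∀ v : Fin 3 → K, F (M *ᵥ v) = c • (M *ᵥ F' v)

/-- The `n`-fold composite of the polynomial self-map of `K³` whose coordinates are the
polynomials `P 0, P 1, P 2`, as a triple of polynomials (the `0`-th iterate is the identity). -/
def iterComp {K : Type*} [CommSemiring K] (P : Fin 3 → MvPolynomial (Fin 3) K) :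
    ℕ → Fin 3 → MvPolynomial (Fin 3) K
  | 0 => fun i => MvPolynomial.X i
  | n + 1 => fun i => MvPolynomial.aeval (iterComp P n) (P i)

theorem core_end {K : Type*} [Field K]
    {b d g b' d' g' p0 p1 p2 q0 q1 q2 r0 r1 r2 : K} (hb : b ≠ 0) (hb' : b' ≠ 0)
    (hdet : p0*q1*r2 - p0*q2*r1 - q0*p1*r2 + q0*p2*r1 + r0*p1*q2 - r0*p2*q1 ≠ 0)
    (hp0 : p0^2 + b*(p1*p2) = p0)
    (hq0 : q0^2 + b*(q1*q2) = r0) (hq1 : q2^2 + d*(q0*q1) = r1) (hq2 : q1^2 + g*(q0*q2) = r2)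
    (hr0 : r0^2 + b*(r1*r2) = q0) (hr1 : r2^2 + d*(r0*r1) = q1) (hr2 : r1^2 + g*(r0*r2) = q2)
    (e0 : 2*q0*r0 + b*(q1*r2+q2*r1) = b'*p0) (e1 : 2*q2*r2 + d*(q0*r1+q1*r0) = b'*p1)
    (e2 : 2*q1*r1 + g*(q0*r2+q2*r0) = b'*p2)
    (f1 : 2*p2*q2 + d*(p0*q1+p1*q0) = d'*q1) (f2 : 2*p1*q1 + g*(p0*q2+p2*q0) = d'*q2)
    (g1 : 2*p2*r2 + d*(p0*r1+p1*r0) = g'*r1) (g2 : 2*p1*r1 + g*(p0*r2+p2*r0) = g'*r2)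
    (hq : q0 = 0) (hr : r0 = 0) :
    p0 = 1 ∧ p1 = 0 ∧ p2 = 0 ∧ b' = b ∧
      ((q2 = 0 ∧ r1 = 0 ∧ q1^3 = 1 ∧ r2 = q1^2 ∧ d' = d ∧ g' = g) ∨
       (q1 = 0 ∧ r2 = 0 ∧ q2^3 = 1 ∧ r1 = q2^2 ∧ d' = g ∧ g' = d)) := by
  subst hq hr
  have h12 : q1 * q2 = 0 := by
    have : b * (q1*q2) = 0 := by linear_combination hq0
    simpa [hb] using this
  rcases mul_eq_zero.1 h12 with h | h
  · subst h
    have hr2z : r2 = 0 := by linear_combination -hq2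
    subst hr2z
    have hp1 : p1 = 0 := by
      have : b' * p1 = 0 := by linear_combination -e1
      simpa [hb'] using this
    have hp2 : p2 = 0 := by
      have : b' * p2 = 0 := by linear_combination -e2
      simpa [hb'] using this
    subst hp1 hp2
    have hpz : p0 ≠ 0 := by rintro rfl; apply hdet; ring
    have hqz : q2 ≠ 0 := by rintro rfl; apply hdet; ring
    have hrz : r1 ≠ 0 := by rintro rfl; apply hdet; ring
    have hp : p0 = 1 := by apply mul_left_cancel₀ hpz; linear_combination hp0
    subst hp
    have h3 : q2^3 = 1 := by
      apply mul_left_cancel₀ hqz; linear_combination hr2 + (q2^2 + r1) * hq1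
    refine ⟨rfl, rfl, rfl, ?_, Or.inr ⟨rfl, rfl, h3, ?_, ?_, ?_⟩⟩
    · linear_combination -e0 + b * h3 - b * q2 * hq1
    · linear_combination -hq1
    · apply mul_right_cancel₀ hqz; linear_combination -f2
    · apply mul_right_cancel₀ hrz; linear_combination -g1
  · subst h
    have hr2z : r1 = 0 := by linear_combination -hq1
    subst hr2z
    have hp1 : p1 = 0 := by
      have : b' * p1 = 0 := by linear_combination -e1
      simpa [hb'] using this
    have hp2 : p2 = 0 := by
      have : b' * p2 = 0 := by linear_combination -e2
      simpa [hb'] using this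
    subst hp1 hp2
    have hpz : p0 ≠ 0 := by rintro rfl; apply hdet; ring
    have hqz : q1 ≠ 0 := by rintro rfl; apply hdet; ring
    have hrz : r2 ≠ 0 := by rintro rfl; apply hdet; ring
    have hp : p0 = 1 := by apply mul_left_cancel₀ hpz; linear_combination hp0
    subst hp
    have h3 : q1^3 = 1 := by
      apply mul_left_cancel₀ hqz; linear_combination hr1 + (q1^2 + r2) * hq2
    refine ⟨rfl, rfl, rfl, ?_, Or.inl ⟨rfl, rfl, h3, ?_, ?_, ?_⟩⟩
    · linear_combination -e0 + b * h3 - b * q1 * hq2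
    · linear_combination -hq2
    · apply mul_right_cancel₀ hqz; linear_combination -f1
    · apply mul_right_cancel₀ hrz; linear_combination -g2

/-- Twice the multiplication operator. -/
def Jm {K : Type*} [Field K] (b d g x y z : K) : Matrix (Fin 3) (Fin 3) K :=
  !![2*x, b*z, b*y; d*y, d*x, 2*z; g*z, 2*y, g*x]

theorem tr2 {K : Type*} [Field K] (b d g x y z x' y' z' : K) :
    (Jm b d g x y z * Jm b d g x' y' z').trace =
      (4+d^2+g^2)*(x*x') + (b*(d+g)+4)*(y*z'+z*y') := by
  simp [Jm, Matrix.trace_fin_three, Matrix.mul_apply, Fin.sum_univ_three]; ring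

set_option maxHeartbeats 2000000 in
theorem core_zero {K : Type*} [Field K] [CharZero K]
    {b d g b' d' g' p0 p1 p2 q0 q1 q2 r0 r1 r2 : K} (hb : b ≠ 0) (hd : d ≠ 0) (hg : g ≠ 0)
    (ht1 : b*d*g ≠ -1) (ht8 : b*d*g ≠ 8)
    (hdet : p0*q1*r2 - p0*q2*r1 - q0*p1*r2 + q0*p2*r1 + r0*p1*q2 - r0*p2*q1 ≠ 0)
    (hp0 : p0^2 + b*(p1*p2) = p0) (hp1 : p2^2 + d*(p0*p1) = p1) (hp2 : p1^2 + g*(p0*p2) = p2)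
    (hq0 : q0^2 + b*(q1*q2) = r0) (hq1 : q2^2 + d*(q0*q1) = r1) (hq2 : q1^2 + g*(q0*q2) = r2)
    (hr0 : r0^2 + b*(r1*r2) = q0) (hr1 : r2^2 + d*(r0*r1) = q1) (hr2 : r1^2 + g*(r0*r2) = q2)
    (e0 : 2*q0*r0 + b*(q1*r2+q2*r1) = b'*p0) (e1 : 2*q2*r2 + d*(q0*r1+q1*r0) = b'*p1)
    (e2 : 2*q1*r1 + g*(q0*r2+q2*r0) = b'*p2)
    (f0 : 2*p0*q0 + b*(p1*q2+p2*q1) = d'*q0)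
    (f1 : 2*p2*q2 + d*(p0*q1+p1*q0) = d'*q1) (f2 : 2*p1*q1 + g*(p0*q2+p2*q0) = d'*q2)
    (g0 : 2*p0*r0 + b*(p1*r2+p2*r1) = g'*r0)
    (g1 : 2*p2*r2 + d*(p0*r1+p1*r0) = g'*r1) (g2 : 2*p1*r1 + g*(p0*r2+p2*r0) = g'*r2) :
    q0 = 0 ∧ r0 = 0 := by
  set M : Matrix (Fin 3) (Fin 3) K := !![p0, q0, r0; p1, q1, r1; p2, q2, r2] with hM
  have hMd : IsUnit M.det := by
    rw [isUnit_iff_ne_zero, Matrix.det_fin_three]; 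
    intro h; apply hdet; simp [hM] at h; linear_combination h
  have hNM : M⁻¹ * M = 1 := Matrix.nonsing_inv_mul M hMd
  have hMN : M * M⁻¹ = 1 := Matrix.mul_nonsing_inv M hMd
  set N := M⁻¹ with hN
  -- intertwining relations
  have Ip : Jm b d g p0 p1 p2 * M = M * Jm b' d' g' 1 0 0 := by
    ext i j; fin_cases i <;> fin_cases j <;>
      simp [Jm, hM, Matrix.mul_apply, Fin.sum_univ_three]
    · linear_combination 2*hp0
    · linear_combination f0
    · linear_combination g0
    · linear_combination 2*hp1
    · linear_combination f1
    · linear_combination g1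
    · linear_combination 2*hp2
    · linear_combination f2
    · linear_combination g2
  have Iq : Jm b d g q0 q1 q2 * M = M * Jm b' d' g' 0 1 0 := by
    ext i j; fin_cases i <;> fin_cases j <;>
      simp [Jm, hM, Matrix.mul_apply, Fin.sum_univ_three]
    · linear_combination f0
    · linear_combination 2*hq0
    · linear_combination e0
    · linear_combination f1
    · linear_combination 2*hq1
    · linear_combination e1
    · linear_combination f2
    · linear_combination 2*hq2
    · linear_combination e2
  have Ir : Jm b d g r0 r1 r2 * M = M * Jm b' d' g' 0 0 1 := by
    ext i j; fin_cases i <;> fin_cases j <;>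
      simp [Jm, hM, Matrix.mul_apply, Fin.sum_univ_three]
    · linear_combination g0
    · linear_combination e0
    · linear_combination 2*hr0
    · linear_combination g1
    · linear_combination e1
    · linear_combination 2*hr1
    · linear_combination g2
    · linear_combination e2
    · linear_combination 2*hr2
  have conj : ∀ A B : Matrix (Fin 3) (Fin 3) K, A * M = M * B → A = M * B * N := by
    intro A B h; rw [← h, Matrix.mul_assoc, hMN, Matrix.mul_one]
  have trc : ∀ A B : Matrix (Fin 3) (Fin 3) K, A * M = M * B → A.trace = B.trace := by
    intro A B h
    rw [conj A B h, Matrix.trace_mul_comm, ← Matrix.mul_assoc, hNM, Matrix.one_mul]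
  have mulc : ∀ A B A' B' : Matrix (Fin 3) (Fin 3) K, A * M = M * B → A' * M = M * B' →
      (A * A') * M = M * (B * B') := by
    intro A B A' B' h h'
    rw [Matrix.mul_assoc, h', ← Matrix.mul_assoc, h, Matrix.mul_assoc]
  have Tp := trc _ _ Ip
  have Tq := trc _ _ Iq
  have Tr := trc _ _ Ir
  simp [Jm, Matrix.trace_fin_three] at Tp Tq Tr
  by_cases hs : 2 + d + g = 0
  swap
  · constructor
    · have : (2+d+g) * q0 = 0 := by linear_combination Tq
      simpa [hs] using this
    · have : (2+d+g) * r0 = 0 := by linear_combination Tr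
      simpa [hs] using this
  have hs' : 2 + d' + g' = 0 := by linear_combination -Tp + p0 * hs
  -- if `p` is a multiple of the first basis vector
  have caseB : p1 = 0 → p2 = 0 → q0 = 0 ∧ r0 = 0 := by
    intro h1 h2
    subst h1 h2
    have hpz : p0 ≠ 0 := by rintro rfl; apply hdet; ring
    have hp : p0 = 1 := by apply mul_left_cancel₀ hpz; linear_combination hp0
    subst hp
    have key : ∀ {c d0 : K}, 2 + c + d0 = 0 → c = 2 → d = d0 → g = d0 → False := by
      intro c d0 h hc h1 h2
      have : (6:K) = 0 := by linear_combination -hs + 2*h - 2*hc + h1 + h2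
      norm_num at this
    by_cases hqz : q0 = 0
    · refine ⟨hqz, ?_⟩
      by_contra hrz
      subst hqz
      have hg' : g' = 2 := by apply mul_right_cancel₀ hrz; linear_combination -g0
      have hq1z : q1 ≠ 0 := by rintro rfl; apply hrz; linear_combination -hq0
      have hq2z : q2 ≠ 0 := by rintro rfl; apply hrz; linear_combination -hq0
      exact key (c := g') (d0 := d') (by linear_combination hs') hg'
        (by apply mul_right_cancel₀ hq1z; linear_combination f1)
        (by apply mul_right_cancel₀ hq2z; linear_combination f2)
    · exfalso
      have hd' : d' = 2 := by apply mul_right_cancel₀ hqz; linear_combination -f0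
      have hrz : r0 = 0 := by
        have : 6 * r0 = 0 := by linear_combination g0 + r0 * hs' - r0 * hd'
        simpa using this
      subst hrz
      have hq1z : r1 ≠ 0 := by rintro rfl; apply hqz; linear_combination -hr0
      have hq2z : r2 ≠ 0 := by rintro rfl; apply hqz; linear_combination -hr0
      exact key (c := d') (d0 := g') (by linear_combination hs') hd'
        (by apply mul_right_cancel₀ hq1z; linear_combination g1)
        (by apply mul_right_cancel₀ hq2z; linear_combination g2)
  -- the trace form
  have Qpp := trc _ _ (mulc _ _ _ _ Ip Ip)
  have Qpq := trc _ _ (mulc _ _ _ _ Ip Iq)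
  have Qpr := trc _ _ (mulc _ _ _ _ Ip Ir)
  have Qqq := trc _ _ (mulc _ _ _ _ Iq Iq)
  have Qqr := trc _ _ (mulc _ _ _ _ Iq Ir)
  have Qrr := trc _ _ (mulc _ _ _ _ Ir Ir)
  rw [tr2, tr2] at Qpp Qpq Qpr Qqq Qqr Qrr
  obtain ⟨α, hα⟩ : ∃ α, α = 4 + d^2 + g^2 := ⟨_, rfl⟩
  obtain ⟨β, hβ⟩ : ∃ β, β = b*(d+g)+4 := ⟨_, rfl⟩
  obtain ⟨α', hα'⟩ : ∃ α', α' = 4 + d'^2 + g'^2 := ⟨_, rfl⟩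
  obtain ⟨β', hβ'⟩ : ∃ β', β' = b'*(d'+g')+4 := ⟨_, rfl⟩
  rw [← hα, ← hβ, ← hα', ← hβ'] at Qpp Qpq Qpr Qqq Qqr Qrr
  have hg2 : g = -2 - d := by linear_combination hs
  have hβ2 : β = 4 - 2*b := by rw [hβ, hg2]; ring
  have hα2 : α = 8 - 2*(d*g) := by rw [hα, hg2]; ring
  by_cases hβ0 : β = 0
  · have hb2 : b = 2 := by
      have : 2 * b = 2 * 2 := by linear_combination hβ2 - hβ0
      exact mul_left_cancel₀ two_ne_zero this
    have hα0 : α ≠ 0 := by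
      intro h; apply ht8; rw [hb2]; linear_combination hα2 - h
    rw [hβ0] at Qqq Qrr
    constructor
    · have : α * q0^2 = 0 := by linear_combination Qqq
      simpa [hα0] using this
    · have : α * r0^2 = 0 := by linear_combination Qrr
      simpa [hα0] using this
  by_cases hα0 : α = 0
  · rw [hα0] at Qpp Qpq Qpr Qqq Qqr Qrr
    have zpq : p1*q2+p2*q1 = 0 := by
      apply mul_left_cancel₀ hβ0; linear_combination Qpq
    have zpr : p1*r2+p2*r1 = 0 := by
      apply mul_left_cancel₀ hβ0; linear_combination Qpr
    have zqq : q1*q2 = 0 := by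
      have : (2*β) * (q1*q2) = 0 := by linear_combination Qqq
      simpa [hβ0] using this
    have zrr : r1*r2 = 0 := by
      have : (2*β) * (r1*r2) = 0 := by linear_combination Qrr
      simpa [hβ0] using this
    by_cases h1 : p1 = 0
    · by_cases h2 : p2 = 0
      · exact caseB h1 h2
      · exfalso
        subst h1
        have k1 : q1 = 0 := by apply mul_left_cancel₀ h2; linear_combination zpq
        have k2 : r1 = 0 := by apply mul_left_cancel₀ h2; linear_combination zpr
        apply hdet; rw [k1, k2]; ring
    · exfalso
      by_cases h2 : p2 = 0
      · subst h2
        have k1 : q2 = 0 := by apply mul_left_cancel₀ h1; linear_combination zpq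
        have k2 : r2 = 0 := by apply mul_left_cancel₀ h1; linear_combination zpr
        apply hdet; rw [k1, k2]; ring
      · have aux : ∀ s t : K, p1 * t + p2 * s = 0 → s * t = 0 → s = 0 ∧ t = 0 := by
          intro s t h h'
          rcases mul_eq_zero.1 h' with h' | h'
          · refine ⟨h', ?_⟩
            apply mul_left_cancel₀ h1; linear_combination h - p2 * h'
          · refine ⟨?_, h'⟩
            apply mul_left_cancel₀ h2; linear_combination h - p1 * h'
        obtain ⟨k1, k2⟩ := aux _ _ zpq zqq
        obtain ⟨k3, k4⟩ := aux _ _ zpr zrr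
        apply hdet; rw [k1, k2, k3, k4]; ring
  -- nondegenerate trace form
  set G : Matrix (Fin 3) (Fin 3) K := !![α, 0, 0; 0, 0, β; 0, β, 0] with hG
  set G' : Matrix (Fin 3) (Fin 3) K := !![α', 0, 0; 0, 0, β'; 0, β', 0] with hG'
  have hGG : Mᵀ * G * M = G' := by
    ext i j; fin_cases i <;> fin_cases j <;>
      simp [hG, hG', hM, Matrix.mul_apply, Fin.sum_univ_three]
    · linear_combination Qpp
    · linear_combination Qpq
    · linear_combination Qpr
    · linear_combination Qpq
    · linear_combination Qqq
    · linear_combination Qqr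
    · linear_combination Qpr
    · linear_combination Qqr
    · linear_combination Qrr
  have hdG' : α' ≠ 0 ∧ β' ≠ 0 := by
    have h := congrArg Matrix.det hGG
    rw [Matrix.det_mul, Matrix.det_mul, Matrix.det_transpose] at h
    have h0 : G.det ≠ 0 := by
      rw [Matrix.det_fin_three]; simp [hG, hα0, hβ0]
    have h1 : G'.det ≠ 0 := by
      rw [← h]; exact mul_ne_zero (mul_ne_zero hMd.ne_zero h0) hMd.ne_zero
    constructor
    · intro h2; apply h1; rw [Matrix.det_fin_three]; simp [hG', h2]
    · intro h2; apply h1; rw [Matrix.det_fin_three]; simp [hG', h2]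
  obtain ⟨hα'0, hβ'0⟩ := hdG'
  set H : Matrix (Fin 3) (Fin 3) K := !![α⁻¹, 0, 0; 0, 0, β⁻¹; 0, β⁻¹, 0] with hH
  set H' : Matrix (Fin 3) (Fin 3) K := !![α'⁻¹, 0, 0; 0, 0, β'⁻¹; 0, β'⁻¹, 0] with hH'
  have hGH : G * H = 1 := by
    ext i j; fin_cases i <;> fin_cases j <;>
      simp [hG, hH, Matrix.mul_apply, Fin.sum_univ_three, hα0, hβ0]
  have hGH' : G' * H' = 1 := by
    ext i j; fin_cases i <;> fin_cases j <;>
      simp [hG', hH', Matrix.mul_apply, Fin.sum_univ_three, hα'0, hβ'0]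
  have hHH : M * H' * Mᵀ = H := by
    have h1 : Mᵀ * (G * (M * H')) = 1 := by
      rw [← hGH', ← hGG]; simp only [Matrix.mul_assoc]
    have h2 : G * (M * H' * Mᵀ) = 1 := by
      have := mul_eq_one_comm.1 h1
      rw [← this]; simp only [Matrix.mul_assoc]
    have h3 := mul_eq_one_comm.1 hGH
    calc M * H' * Mᵀ = (H * G) * (M * H' * Mᵀ) := by rw [h3, Matrix.one_mul]
      _ = H := by rw [Matrix.mul_assoc, h2, Matrix.mul_one]
  have ent : ∀ i j, (M * H' * Mᵀ) i j = H i j := fun i j => by rw [hHH]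
  have E00 := ent 0 0
  have E01 := ent 0 1
  have E02 := ent 0 2
  have E11 := ent 1 1
  have E12 := ent 1 2
  have E22 := ent 2 2
  simp [hH, hH', hM, Matrix.mul_apply, Fin.sum_univ_three] at E00 E01 E02 E11 E12 E22
  by_cases hu : α⁻¹ + b * β⁻¹ = 0
  swap
  · have U0 : (α'⁻¹ + b' * β'⁻¹) * p0 = α⁻¹ + b * β⁻¹ := by
      linear_combination E00 + b * E12 - α'⁻¹ * hp0 - β'⁻¹ * e0
    have U1 : (α'⁻¹ + b' * β'⁻¹) * p1 = 0 := by
      linear_combination E22 + d * E01 - α'⁻¹ * hp1 - β'⁻¹ * e1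
    have U2 : (α'⁻¹ + b' * β'⁻¹) * p2 = 0 := by
      linear_combination E11 + g * E02 - α'⁻¹ * hp2 - β'⁻¹ * e2
    have hne : α'⁻¹ + b' * β'⁻¹ ≠ 0 := by
      intro h; rw [h, zero_mul] at U0; exact hu U0.symm
    exact caseB (by simpa [hne] using U1) (by simpa [hne] using U2)
  -- the Casimir functional
  set R : Matrix (Fin 3) (Fin 3) K := α⁻¹ • (Jm b d g 1 0 0 * Jm b d g 1 0 0) +
    β⁻¹ • (Jm b d g 0 1 0 * Jm b d g 0 0 1 + Jm b d g 0 0 1 * Jm b d g 0 1 0) with hR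
  set R' : Matrix (Fin 3) (Fin 3) K := α'⁻¹ • (Jm b' d' g' 1 0 0 * Jm b' d' g' 1 0 0) +
    β'⁻¹ • (Jm b' d' g' 0 1 0 * Jm b' d' g' 0 0 1 + Jm b' d' g' 0 0 1 * Jm b' d' g' 0 1 0)
    with hR'
  have hRR : R = α'⁻¹ • (Jm b d g p0 p1 p2 * Jm b d g p0 p1 p2) +
    β'⁻¹ • (Jm b d g q0 q1 q2 * Jm b d g r0 r1 r2 +
      Jm b d g r0 r1 r2 * Jm b d g q0 q1 q2) := by
    ext i j; fin_cases i <;> fin_cases j <;>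
      simp [hR, Jm, Matrix.mul_apply, Fin.sum_univ_three]
    · linear_combination -4*E00 - b*(d+g)*E12
    · linear_combination -(2*b+b*d)*E02 - 2*b*E11
    · linear_combination -(2*b+b*g)*E01 - 2*b*E22
    · linear_combination -(2*d+d^2)*E01 - 2*g*E22
    · linear_combination -(b*d+4)*E12 - d^2*E00
    · linear_combination -b*d*E11 - (2*d+2*g)*E02
    · linear_combination -(2*g+g^2)*E02 - 2*d*E11
    · linear_combination -b*g*E22 - (2*d+2*g)*E01
    · linear_combination -(b*g+4)*E12 - g^2*E00
  have IR : R * M = M * R' := by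
    rw [hRR, hR']
    simp only [add_mul, mul_add, Matrix.smul_mul, Matrix.mul_smul]
    rw [mulc _ _ _ _ Ip Ip, mulc _ _ _ _ Iq Ir, mulc _ _ _ _ Ir Iq]
  have κ : ∀ b d g α β x y z : K, (Jm b d g x y z * (α • (Jm b d g 1 0 0 * Jm b d g 1 0 0) +
    β • (Jm b d g 0 1 0 * Jm b d g 0 0 1 + Jm b d g 0 0 1 * Jm b d g 0 1 0))).trace =
    x * (α * (8 + d^3 + g^3) + β * (2*b*(d+g) + b*(d^2+g^2) + 4*(d+g))) := by
    intro b d g α β x y z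
    simp [Jm, Matrix.trace_fin_three, Matrix.mul_apply, Fin.sum_univ_three]; ring
  have Kq := trc _ _ (mulc _ _ _ _ Iq IR)
  have Kr := trc _ _ (mulc _ _ _ _ Ir IR)
  rw [hR, hR', κ, κ, zero_mul] at Kq Kr
  have hne : α⁻¹ * (8 + d^3 + g^3) + β⁻¹ * (2*b*(d+g) + b*(d^2+g^2) + 4*(d+g)) ≠ 0 := by
    intro hk
    have ha : α * α⁻¹ = 1 := mul_inv_cancel₀ hα0
    have hbb : β * β⁻¹ = 1 := mul_inv_cancel₀ hβ0
    have hu2 : β + b * α = 0 := by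
      linear_combination α * β * hu - β * ha - b * α * hbb
    have hk2 : β * (8 + d^3 + g^3) + α * (2*b*(d+g) + b*(d^2+g^2) + 4*(d+g)) = 0 := by
      linear_combination α * β * hk - β * (8 + d^3 + g^3) * ha -
        α * (2*b*(d+g) + b*(d^2+g^2) + 4*(d+g)) * hbb
    obtain ⟨s, hs0⟩ : ∃ s, s = d * g := ⟨_, rfl⟩
    have k1 : 8 + d^3 + g^3 = 6 * s := by rw [hs0, hg2]; ring
    have k2 : 2*b*(d+g) + b*(d^2+g^2) + 4*(d+g) = -2*b*s - 8 := by rw [hs0, hg2]; ring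
    rw [k1, k2, hβ2, hα2, ← hs0] at hk2
    rw [hβ2, hα2, ← hs0] at hu2
    have hu3 : b * s = 3 * b + 2 := by
      have : (2:K) * (b * s) = 2 * (3*b+2) := by linear_combination -hu2
      exact mul_left_cancel₀ two_ne_zero this
    have hsb : s = b + 2 := by
      have : (48:K) * s = 48 * (b+2) := by linear_combination hk2 - (4*s - 16) * hu3
      exact mul_left_cancel₀ (by norm_num) this
    have hbq : (b - 2) * (b + 1) = 0 := by linear_combination hu3 - b * hsb
    rcases mul_eq_zero.1 hbq with h | h
    · apply hβ0; linear_combination hβ2 - 2 * h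
    · apply ht1
      have : b * d * g = b * s := by rw [hs0]; ring
      rw [this, hu3]; linear_combination 3 * h
  exact ⟨by simpa [hne] using Kq, by simpa [hne] using Kr⟩

theorem sdata_hom {G : Type*} [Group G] (x y : G) (hx : x ^ 3 = 1) (hy : y * y = 1)
    (hxy : y * x * y = x⁻¹) (hx1 : x ≠ 1) (hyx : ∀ n : ℕ, y ≠ x ^ n) :
    ∃ φ : DihedralGroup 3 →* G, Function.Injective φ ∧
      (∀ i : ZMod 3, φ (DihedralGroup.r i) = x ^ i.val) ∧
      (∀ i : ZMod 3, φ (DihedralGroup.sr i) = y * x ^ i.val) ∧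
      φ.range = Subgroup.closure {x, y} := by
  have hadd : ∀ i j : ZMod 3, x ^ (i + j).val = x ^ i.val * x ^ j.val := by
    intro i j
    rw [ZMod.val_add, ← pow_eq_pow_mod _ hx, pow_add]
  have hneg : ∀ i : ZMod 3, x ^ (-i).val = (x ^ i.val)⁻¹ := by
    intro i
    rw [eq_inv_iff_mul_eq_one, ← hadd]; simp
  have hsub : ∀ i j : ZMod 3, x ^ (j - i).val = (x ^ i.val)⁻¹ * x ^ j.val := by
    intro i j
    rw [← hneg, ← hadd]; congr 2; ring
  have hyi : y⁻¹ = y := inv_eq_of_mul_eq_one_left hy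
  have hs : SemiconjBy y x⁻¹ x := by
    have h2 : y * x⁻¹ = x * y := by
      rw [← hxy, mul_assoc y x y, ← mul_assoc, hy, one_mul]
    exact h2
  have hc : ∀ n : ℕ, x ^ n * y = y * (x ^ n)⁻¹ := by
    intro n
    have := (hs.pow_right n).eq
    rw [inv_pow] at this
    exact this.symm
  let φ : DihedralGroup 3 →* G := MonoidHom.mk' (fun a => match a with
    | DihedralGroup.r i => x ^ i.val
    | DihedralGroup.sr i => y * x ^ i.val) (by
      rintro (i | i) (j | j)
      · simp only [DihedralGroup.r_mul_r, hadd]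
      · simp only [DihedralGroup.r_mul_sr, hsub]
        rw [← mul_assoc, ← mul_assoc, hc]
      · simp only [DihedralGroup.sr_mul_r, hadd, mul_assoc]
      · simp only [DihedralGroup.sr_mul_sr, hsub]
        rw [mul_assoc y, ← mul_assoc _ y, hc, ← mul_assoc, ← mul_assoc, hy, one_mul])
  have hr : ∀ i : ZMod 3, φ (DihedralGroup.r i) = x ^ i.val := fun i => rfl
  have hsr : ∀ i : ZMod 3, φ (DihedralGroup.sr i) = y * x ^ i.val := fun i => rfl
  have hord : orderOf x = 3 := orderOf_eq_prime hx hx1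
  refine ⟨φ, ?_, hr, hsr, ?_⟩
  · rw [injective_iff_map_eq_one]
    rintro (i | i) h
    · rw [hr] at h
      have h3 : 3 ∣ i.val := by
        have h4 := orderOf_dvd_of_pow_eq_one h
        rwa [hord] at h4
      have : i.val = 0 := Nat.eq_zero_of_dvd_of_lt h3 (ZMod.val_lt i)
      rw [(ZMod.val_eq_zero i).1 this]; rfl
    · rw [hsr] at h
      exfalso
      apply hyx i.val
      rw [← hyi]; exact inv_eq_of_mul_eq_one_right h
  · apply le_antisymm
    · rintro _ ⟨a, rfl⟩
      have h1 : x ∈ Subgroup.closure {x, y} := Subgroup.subset_closure (by simp)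
      have h2 : y ∈ Subgroup.closure {x, y} := Subgroup.subset_closure (by simp)
      rcases a with i | i
      · rw [hr]; exact Subgroup.pow_mem _ h1 _
      · rw [hsr]; exact Subgroup.mul_mem _ h2 (Subgroup.pow_mem _ h1 _)
    · rw [Subgroup.closure_le]
      rintro z (rfl | rfl)
      · exact ⟨DihedralGroup.r 1, by rw [hr, show (1 : ZMod 3).val = 1 from rfl, pow_one]⟩
      · exact ⟨DihedralGroup.sr 0, by rw [hsr]; simp⟩

theorem dihedral_perm : Nonempty (DihedralGroup 3 ≃* Equiv.Perm (Fin 3)) := by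
  obtain ⟨φ, hφ, -⟩ := sdata_hom (finRotate 3) (Equiv.swap (0 : Fin 3) 1)
    (by decide) (by decide) (by decide) (by decide) (by
      intro n h
      have := congrArg Equiv.Perm.sign h
      rw [map_pow, Equiv.Perm.sign_swap (by decide), sign_finRotate] at this
      simp at this)
  refine ⟨MulEquiv.ofBijective φ ?_⟩
  rw [Fintype.bijective_iff_injective_and_card]
  refine ⟨hφ, ?_⟩
  rw [DihedralGroup.card, Fintype.card_perm]; rfl

theorem sdata_closure {G : Type*} [Group G] (x y : G) (hx : x ^ 3 = 1) (hy : y * y = 1)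
    (hxy : y * x * y = x⁻¹) (hx1 : x ≠ 1) (hyx : ∀ n : ℕ, y ≠ x ^ n) :
    (∀ z, z ∈ Subgroup.closure {x, y} ↔ ∃ n : ℕ, z = x ^ n ∨ z = y * x ^ n) ∧
    Nat.card (Subgroup.closure {x, y}) = 6 ∧
    Nonempty (Subgroup.closure {x, y} ≃* Equiv.Perm (Fin 3)) := by
  obtain ⟨φ, hφ, hr, hsr, hrange⟩ := sdata_hom x y hx hy hxy hx1 hyx
  have e : DihedralGroup 3 ≃* Subgroup.closure {x, y} := by
    rw [← hrange]; exact MonoidHom.ofInjective hφ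
  refine ⟨?_, ?_, ?_⟩
  · intro z
    constructor
    · rw [← hrange]
      rintro ⟨a, rfl⟩
      rcases a with i | i
      · exact ⟨i.val, Or.inl (hr i)⟩
      · exact ⟨i.val, Or.inr (hsr i)⟩
    · have h1 : x ∈ Subgroup.closure {x, y} := Subgroup.subset_closure (by simp)
      have h2 : y ∈ Subgroup.closure {x, y} := Subgroup.subset_closure (by simp)
      rintro ⟨n, rfl | rfl⟩
      · exact Subgroup.pow_mem _ h1 _
      · exact Subgroup.mul_mem _ h2 (Subgroup.pow_mem _ h1 _)
  · rw [← Nat.card_congr e.toEquiv, DihedralGroup.nat_card]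
  · obtain ⟨e'⟩ := dihedral_perm
    exact ⟨e.symm.trans e'⟩

theorem cdata_closure {G : Type*} [Group G] (x : G) (hx : x ^ 3 = 1) (hx1 : x ≠ 1) :
    (∀ z, z ∈ Subgroup.closure {x} ↔ ∃ n : ℕ, z = x ^ n) ∧
    Nat.card (Subgroup.closure {x}) = 3 := by
  have hord : orderOf x = 3 := orderOf_eq_prime hx hx1
  have hf : IsOfFinOrder x := isOfFinOrder_iff_pow_eq_one.2 ⟨3, by norm_num, hx⟩
  rw [← Subgroup.zpowers_eq_closure]
  refine ⟨?_, ?_⟩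
  · intro z
    rw [← hf.mem_powers_iff_mem_zpowers]
    constructor
    · rintro ⟨n, rfl⟩; exact ⟨n, rfl⟩
    · rintro ⟨n, rfl⟩; exact ⟨n, rfl⟩
  · rw [Nat.card_zpowers, hord]

section PGL
variable {K : Type*} [Field K]

theorem toPGL3_of {A : Matrix (Fin 3) (Fin 3) K} (h : A.det ≠ 0) :
    toPGL3 A = QuotientGroup.mk (Matrix.GeneralLinearGroup.mkOfDetNeZero A h) := by
  unfold toPGL3; rw [dif_pos h]

theorem toPGL3_mul {A B : Matrix (Fin 3) (Fin 3) K} (hA : A.det ≠ 0) (hB : B.det ≠ 0) :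
    toPGL3 (A * B) = toPGL3 A * toPGL3 B := by
  have h : (A * B).det ≠ 0 := by rw [Matrix.det_mul]; exact mul_ne_zero hA hB
  rw [toPGL3_of hA, toPGL3_of hB, toPGL3_of h, ← QuotientGroup.mk_mul]
  congr 1
  ext i j
  rfl

theorem toPGL3_one : toPGL3 (1 : Matrix (Fin 3) (Fin 3) K) = 1 := by
  have h : (1 : Matrix (Fin 3) (Fin 3) K).det ≠ 0 := by simp
  rw [toPGL3_of h, ← QuotientGroup.mk_one]
  congr 1
  ext i j
  rfl

theorem toPGL3_pow {A : Matrix (Fin 3) (Fin 3) K} (hA : A.det ≠ 0) (n : ℕ) :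
    toPGL3 (A ^ n) = toPGL3 A ^ n := by
  induction n with
  | zero => rw [pow_zero, pow_zero, toPGL3_one]
  | succ n ih =>
    rw [pow_succ, pow_succ, toPGL3_mul _ hA, ih]
    rw [Matrix.det_pow]; exact pow_ne_zero _ hA

/-- A matrix which is a nonzero multiple of `N` represents the same class. -/
theorem mk_eq_toPGL3 (M : GL (Fin 3) K) (N : Matrix (Fin 3) (Fin 3) K) (c : K) (hc : c ≠ 0)
    (h : (M : Matrix (Fin 3) (Fin 3) K) = c • N) :
    (QuotientGroup.mk M : PGL3 K) = toPGL3 N := by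
  have hdM : (M : Matrix (Fin 3) (Fin 3) K).det ≠ 0 :=
    ((Matrix.isUnit_iff_isUnit_det _).1 M.isUnit).ne_zero
  have hN : N.det ≠ 0 := by
    intro h0; apply hdM; rw [h, Matrix.det_smul, h0, mul_zero]
  rw [toPGL3_of hN, QuotientGroup.eq, Subgroup.mem_center_iff]
  set N' := Matrix.GeneralLinearGroup.mkOfDetNeZero N hN with hN'
  have hNN : (N' : Matrix (Fin 3) (Fin 3) K) = N := rfl
  have hsc : ∀ P : GL (Fin 3) K, P * (M * N'⁻¹) = (M * N'⁻¹) * P := by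
    have : ((M * N'⁻¹ : GL (Fin 3) K) : Matrix (Fin 3) (Fin 3) K) = c • 1 := by
      rw [Units.val_mul, h, ← hNN, Matrix.smul_mul, ← Units.val_mul, mul_inv_cancel]; rfl
    intro P
    apply Units.ext
    rw [Units.val_mul, Units.val_mul (M * N'⁻¹), this]; simp
  intro P
  have h1 := hsc (N' * P⁻¹ * N'⁻¹)
  have h2 : M * N'⁻¹ = N' * (M⁻¹ * N')⁻¹ * N'⁻¹ := by group
  have h3 := hsc N'
  have hcomm : M = N' * (N'⁻¹ * M) := by group
  have h4 : M * N'⁻¹ = N'⁻¹ * M := by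
    have : N' * (M * N'⁻¹) = M := by rw [h3]; group
    calc M * N'⁻¹ = N'⁻¹ * (N' * (M * N'⁻¹)) := by group
      _ = N'⁻¹ * M := by rw [this]
  have h5 : M⁻¹ * N' = (M * N'⁻¹)⁻¹ := by rw [h4]; group
  rw [h5]
  have h6 : Commute P (M * N'⁻¹) := hsc P
  exact h6.inv_right.eq

theorem toPGL3_inj {A B : Matrix (Fin 3) (Fin 3) K} (hA : A.det ≠ 0) (hB : B.det ≠ 0)
    (h : toPGL3 A = toPGL3 B) : ∃ c : K, B = c • A := by
  rw [toPGL3_of hA, toPGL3_of hB, QuotientGroup.eq] at h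
  set A' := Matrix.GeneralLinearGroup.mkOfDetNeZero A hA
  set B' := Matrix.GeneralLinearGroup.mkOfDetNeZero B hB
  rw [Matrix.GeneralLinearGroup.mem_center_iff_val_mem_range_scalar] at h
  obtain ⟨c, hc⟩ := h
  refine ⟨c, ?_⟩
  have h1 : B' = A' * (A'⁻¹ * B') := by group
  have h2 := congrArg (fun u : GL (Fin 3) K => (u : Matrix (Fin 3) (Fin 3) K)) h1
  simp only [Units.val_mul A'] at h2
  have h3 : ((A'⁻¹ * B' : GL (Fin 3) K) : Matrix (Fin 3) (Fin 3) K) = c • 1 := by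
    rw [← hc, Matrix.scalar_apply, Matrix.smul_one_eq_diagonal]
  rw [h3, Matrix.mul_smul, Matrix.mul_one] at h2
  exact h2
end PGL

/-- The quadratic map. -/
def fq {K : Type*} [Field K] (b d g : K) (v : Fin 3 → K) : Fin 3 → K :=
  ![v 0 ^ 2 + b * (v 1 * v 2), v 2 ^ 2 + d * (v 0 * v 1), v 1 ^ 2 + g * (v 0 * v 2)]

/-- The diagonal matrices. -/
def Dg {K : Type*} [Field K] (ω : K) : Matrix (Fin 3) (Fin 3) K :=
  Matrix.diagonal ![1, ω, ω ^ 2]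

/-- The transposition. -/
def Sw (K : Type*) [Field K] : Matrix (Fin 3) (Fin 3) K := !![1,0,0; 0,0,1; 0,1,0]

section final
variable {K : Type*} [Field K]

theorem det_Dg {ω : K} (h : ω ≠ 0) : (Dg ω).det ≠ 0 := by
  simp [Dg, Matrix.det_diagonal, Fin.prod_univ_three, h]

theorem det_Sw : (Sw K).det ≠ 0 := by
  simp [Sw, Matrix.det_fin_three]

theorem Dg_pow (ω : K) (n : ℕ) : Dg ω ^ n = Dg (ω ^ n) := by
  unfold Dg
  rw [Matrix.diagonal_pow]
  congr 1
  ext i; fin_cases i <;> simp [← pow_mul, mul_comm]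

theorem fq_Dg (b d g : K) {ω : K} (h : ω ^ 3 = 1) (v : Fin 3 → K) :
    fq b d g (Dg ω *ᵥ v) = Dg ω *ᵥ fq b d g v := by
  ext i; fin_cases i <;> simp [fq, Dg, Matrix.mulVec_diagonal]
  · left; linear_combination v 1 * v 2 * h
  · linear_combination ω * v 2 ^ 2 * h
  · ring

theorem fq_Sw (b d g : K) (v : Fin 3 → K) :
    fq b d g (Sw K *ᵥ v) = Sw K *ᵥ fq b g d v := by
  ext i; fin_cases i <;> simp [fq, Sw, Matrix.mulVec, dotProduct, Fin.sum_univ_three, mul_comm]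

theorem classify [CharZero K] {b d g b' d' g' : K} (hb : b ≠ 0) (hd : d ≠ 0) (hg : g ≠ 0)
    (ht1 : b*d*g ≠ -1) (ht8 : b*d*g ≠ 8) (hb' : b' ≠ 0)
    (M : Matrix (Fin 3) (Fin 3) K) (hM : M.det ≠ 0)
    (h : ∀ v, fq b d g (M *ᵥ v) = M *ᵥ fq b' d' g' v) :
    ∃ ω : K, ω ^ 3 = 1 ∧ b' = b ∧ ((M = Dg ω ∧ d' = d ∧ g' = g) ∨
      (M = Sw K * Dg ω ∧ d' = g ∧ g' = d)) := by
  obtain ⟨p0, hp0⟩ : ∃ x, x = M 0 0 := ⟨_, rfl⟩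
  obtain ⟨p1, hp1⟩ : ∃ x, x = M 1 0 := ⟨_, rfl⟩
  obtain ⟨p2, hp2⟩ : ∃ x, x = M 2 0 := ⟨_, rfl⟩
  obtain ⟨q0, hq0⟩ : ∃ x, x = M 0 1 := ⟨_, rfl⟩
  obtain ⟨q1, hq1⟩ : ∃ x, x = M 1 1 := ⟨_, rfl⟩
  obtain ⟨q2, hq2⟩ : ∃ x, x = M 2 1 := ⟨_, rfl⟩
  obtain ⟨r0, hr0⟩ : ∃ x, x = M 0 2 := ⟨_, rfl⟩
  obtain ⟨r1, hr1⟩ : ∃ x, x = M 1 2 := ⟨_, rfl⟩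
  obtain ⟨r2, hr2⟩ : ∃ x, x = M 2 2 := ⟨_, rfl⟩
  have hME : M = !![p0, q0, r0; p1, q1, r1; p2, q2, r2] := by
    ext i j; fin_cases i <;> fin_cases j <;> simp [*]
  clear hp0 hp1 hp2 hq0 hq1 hq2 hr0 hr1 hr2
  subst hME
  have ev : ∀ x y z : K, (p0*x+q0*y+r0*z)^2 + b*((p1*x+q1*y+r1*z)*(p2*x+q2*y+r2*z)) =
        p0*(x^2+b'*(y*z)) + q0*(z^2+d'*(x*y)) + r0*(y^2+g'*(x*z)) ∧
      (p2*x+q2*y+r2*z)^2 + d*((p0*x+q0*y+r0*z)*(p1*x+q1*y+r1*z)) =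
        p1*(x^2+b'*(y*z)) + q1*(z^2+d'*(x*y)) + r1*(y^2+g'*(x*z)) ∧
      (p1*x+q1*y+r1*z)^2 + g*((p0*x+q0*y+r0*z)*(p2*x+q2*y+r2*z)) =
        p2*(x^2+b'*(y*z)) + q2*(z^2+d'*(x*y)) + r2*(y^2+g'*(x*z)) := by
    intro x y z
    have h0 := congrFun (h ![x, y, z]) 0
    have h1 := congrFun (h ![x, y, z]) 1
    have h2 := congrFun (h ![x, y, z]) 2
    simp [fq, Matrix.mulVec, dotProduct, Fin.sum_univ_three] at h0 h1 h2
    exact ⟨h0, h1, h2⟩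
  obtain ⟨a0, a1, a2⟩ := ev 1 0 0
  obtain ⟨b0, b1, b2⟩ := ev 0 1 0
  obtain ⟨c0, c1, c2⟩ := ev 0 0 1
  obtain ⟨ab0, ab1, ab2⟩ := ev 1 1 0
  obtain ⟨ac0, ac1, ac2⟩ := ev 1 0 1
  obtain ⟨bc0, bc1, bc2⟩ := ev 0 1 1
  clear ev h
  have hdet : p0*q1*r2 - p0*q2*r1 - q0*p1*r2 + q0*p2*r1 + r0*p1*q2 - r0*p2*q1 ≠ 0 := by
    intro h; apply hM; rw [Matrix.det_fin_three]; simp; linear_combination h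
  have hp0 : p0^2 + b*(p1*p2) = p0 := by linear_combination a0
  have hp1 : p2^2 + d*(p0*p1) = p1 := by linear_combination a1
  have hp2 : p1^2 + g*(p0*p2) = p2 := by linear_combination a2
  have hq0 : q0^2 + b*(q1*q2) = r0 := by linear_combination b0
  have hq1 : q2^2 + d*(q0*q1) = r1 := by linear_combination b1
  have hq2 : q1^2 + g*(q0*q2) = r2 := by linear_combination b2
  have hr0 : r0^2 + b*(r1*r2) = q0 := by linear_combination c0
  have hr1 : r2^2 + d*(r0*r1) = q1 := by linear_combination c1
  have hr2 : r1^2 + g*(r0*r2) = q2 := by linear_combination c2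
  have e0 : 2*q0*r0 + b*(q1*r2+q2*r1) = b'*p0 := by linear_combination bc0 - b0 - c0
  have e1 : 2*q2*r2 + d*(q0*r1+q1*r0) = b'*p1 := by linear_combination bc1 - b1 - c1
  have e2 : 2*q1*r1 + g*(q0*r2+q2*r0) = b'*p2 := by linear_combination bc2 - b2 - c2
  have f0 : 2*p0*q0 + b*(p1*q2+p2*q1) = d'*q0 := by linear_combination ab0 - a0 - b0
  have f1 : 2*p2*q2 + d*(p0*q1+p1*q0) = d'*q1 := by linear_combination ab1 - a1 - b1
  have f2 : 2*p1*q1 + g*(p0*q2+p2*q0) = d'*q2 := by linear_combination ab2 - a2 - b2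
  have g0 : 2*p0*r0 + b*(p1*r2+p2*r1) = g'*r0 := by linear_combination ac0 - a0 - c0
  have g1 : 2*p2*r2 + d*(p0*r1+p1*r0) = g'*r1 := by linear_combination ac1 - a1 - c1
  have g2 : 2*p1*r1 + g*(p0*r2+p2*r0) = g'*r2 := by linear_combination ac2 - a2 - c2
  obtain ⟨hqz, hrz⟩ := core_zero hb hd hg ht1 ht8 hdet hp0 hp1 hp2 hq0 hq1 hq2 hr0 hr1 hr2
    e0 e1 e2 f0 f1 f2 g0 g1 g2
  obtain ⟨k0, k1, k2, kb, h | h⟩ := core_end hb hb' hdet hp0 hq0 hq1 hq2 hr0 hr1 hr2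
    e0 e1 e2 f1 f2 g1 g2 hqz hrz
  · obtain ⟨l1, l2, l3, l4, l5, l6⟩ := h
    refine ⟨q1, l3, kb, Or.inl ⟨?_, l5, l6⟩⟩
    rw [k0, k1, k2, hqz, hrz, l1, l2, l4]
    ext i j; fin_cases i <;> fin_cases j <;> simp [Dg]
  · obtain ⟨l1, l2, l3, l4, l5, l6⟩ := h
    refine ⟨q2, l3, kb, Or.inr ⟨?_, l5, l6⟩⟩
    rw [k0, k1, k2, hqz, hrz, l1, l2, l4]
    ext i j; fin_cases i <;> fin_cases j <;>
      simp [Dg, Sw]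

theorem fq_smul (b d g c : K) (v : Fin 3 → K) : fq b d g (c • v) = c ^ 2 • fq b d g v := by
  ext i; fin_cases i <;> simp [fq] <;> ring

/-- The scalar can be absorbed into the matrix. -/
theorem classify_c [CharZero K] {b d g b' d' g' : K} (hb : b ≠ 0) (hd : d ≠ 0) (hg : g ≠ 0)
    (ht1 : b*d*g ≠ -1) (ht8 : b*d*g ≠ 8) (hb' : b' ≠ 0)
    (M : Matrix (Fin 3) (Fin 3) K) (hM : M.det ≠ 0) (c : K) (hc : c ≠ 0)
    (h : ∀ v, fq b d g (M *ᵥ v) = c • (M *ᵥ fq b' d' g' v)) :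
    ∃ ω : K, ω ^ 3 = 1 ∧ b' = b ∧ ((M = c • Dg ω ∧ d' = d ∧ g' = g) ∨
      (M = c • (Sw K * Dg ω) ∧ d' = g ∧ g' = d)) := by
  have hN : (c⁻¹ • M).det ≠ 0 := by
    rw [Matrix.det_smul]; exact mul_ne_zero (pow_ne_zero _ (inv_ne_zero hc)) hM
  have hMc : M = c • (c⁻¹ • M) := by rw [smul_smul, mul_inv_cancel₀ hc, one_smul]
  obtain ⟨ω, h1, h2, h3⟩ := classify (b' := b') (d' := d') (g' := g') hb hd hg ht1 ht8 hb'
    (c⁻¹ • M) hN (by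
      intro v
      rw [Matrix.smul_mulVec, Matrix.smul_mulVec, fq_smul, h, smul_smul]
      congr 1
      field_simp)
  refine ⟨ω, h1, h2, ?_⟩
  rcases h3 with ⟨h3, h4⟩ | ⟨h3, h4⟩
  · left; rw [hMc, h3]; exact ⟨rfl, h4⟩
  · right; rw [hMc, h3]; exact ⟨rfl, h4⟩

theorem mem_AutQ (F : (Fin 3 → K) → (Fin 3 → K)) (N : Matrix (Fin 3) (Fin 3) K)
    (hN : N.det ≠ 0) (h : ∀ v, F (N *ᵥ v) = N *ᵥ F v) : toPGL3 N ∈ AutQ F := by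
  rw [toPGL3_of hN]
  refine ⟨_, rfl, 1, one_ne_zero, ?_⟩
  intro v
  rw [one_smul]
  exact h v

theorem aut_forward [CharZero K] {ζ : K} (hζ : IsPrimitiveRoot ζ 3)
    {b d g : K} (hb : b ≠ 0) (hd : d ≠ 0) (hg : g ≠ 0)
    (ht1 : b*d*g ≠ -1) (ht8 : b*d*g ≠ 8) {z : PGL3 K} (hz : z ∈ AutQ (fq b d g)) :
    ∃ n : ℕ, z = toPGL3 (Dg ζ) ^ n ∨ (d = g ∧ z = toPGL3 (Sw K) * toPGL3 (Dg ζ) ^ n) := by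
  obtain ⟨M, rfl, c, hc, h⟩ := hz
  have hdM : (M : Matrix (Fin 3) (Fin 3) K).det ≠ 0 :=
    ((Matrix.isUnit_iff_isUnit_det _).1 M.isUnit).ne_zero
  have hζ0 : ζ ≠ 0 := hζ.ne_zero (by norm_num)
  obtain ⟨ω, h1, -, h3⟩ := classify_c hb hd hg ht1 ht8 hb M hdM c hc h
  obtain ⟨n, -, rfl⟩ := hζ.eq_pow_of_pow_eq_one h1
  refine ⟨n, ?_⟩
  have hdp : (Dg ζ ^ n).det ≠ 0 := by rw [Matrix.det_pow]; exact pow_ne_zero _ (det_Dg hζ0)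
  rcases h3 with ⟨h3, -⟩ | ⟨h3, h4, -⟩
  · left
    rw [mk_eq_toPGL3 M _ c hc h3, ← toPGL3_pow (det_Dg hζ0), Dg_pow]
  · right
    refine ⟨h4, ?_⟩
    rw [mk_eq_toPGL3 M _ c hc h3, ← toPGL3_pow (det_Dg hζ0), ← toPGL3_mul det_Sw hdp, Dg_pow]

theorem Dg_mem {ζ : K} (hζ : IsPrimitiveRoot ζ 3) (b d g : K) (n : ℕ) :
    toPGL3 (Dg ζ) ^ n ∈ AutQ (fq b d g) := by
  have hζ0 : ζ ≠ 0 := hζ.ne_zero (by norm_num)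
  rw [← toPGL3_pow (det_Dg hζ0), Dg_pow]
  refine mem_AutQ _ _ (det_Dg (pow_ne_zero _ hζ0)) (fq_Dg _ _ _ ?_)
  rw [← pow_mul, mul_comm, pow_mul, hζ.pow_eq_one, one_pow]

theorem Sw_Dg_mem {ζ : K} (hζ : IsPrimitiveRoot ζ 3) (b d : K) (n : ℕ) :
    toPGL3 (Sw K) * toPGL3 (Dg ζ) ^ n ∈ AutQ (fq b d d) := by
  have hζ0 : ζ ≠ 0 := hζ.ne_zero (by norm_num)
  have hdp : (Dg (ζ ^ n)).det ≠ 0 := det_Dg (pow_ne_zero _ hζ0)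
  rw [← toPGL3_pow (det_Dg hζ0), Dg_pow, ← toPGL3_mul det_Sw hdp]
  refine mem_AutQ _ _ (by rw [Matrix.det_mul]; exact mul_ne_zero det_Sw hdp) ?_
  intro v
  rw [← Matrix.mulVec_mulVec, ← Matrix.mulVec_mulVec, fq_Sw, fq_Dg]
  rw [← pow_mul, mul_comm, pow_mul, hζ.pow_eq_one, one_pow]

theorem gen_facts {ζ : K} (hζ : IsPrimitiveRoot ζ 3) :
    toPGL3 (Dg ζ) ^ 3 = 1 ∧ toPGL3 (Sw K) * toPGL3 (Sw K) = 1 ∧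
    toPGL3 (Sw K) * toPGL3 (Dg ζ) * toPGL3 (Sw K) = (toPGL3 (Dg ζ))⁻¹ ∧
    toPGL3 (Dg ζ) ≠ 1 ∧ ∀ n : ℕ, toPGL3 (Sw K) ≠ toPGL3 (Dg ζ) ^ n := by
  have hζ0 : ζ ≠ 0 := hζ.ne_zero (by norm_num)
  have hz3 : ζ ^ 3 = 1 := hζ.pow_eq_one
  have hD := det_Dg hζ0
  have hS := det_Sw (K := K)
  have hSD : (Sw K * Dg ζ).det ≠ 0 := by rw [Matrix.det_mul]; exact mul_ne_zero hS hD
  have hSDS : (Sw K * Dg ζ * Sw K).det ≠ 0 := by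
    rw [Matrix.det_mul]; exact mul_ne_zero hSD hS
  have hD1 : Dg (1 : K) = 1 := by
    ext i j; fin_cases i <;> fin_cases j <;> simp [Dg]
  refine ⟨?_, ?_, ?_, ?_, ?_⟩
  · rw [← toPGL3_pow hD, Dg_pow, hz3, hD1, toPGL3_one]
  · rw [← toPGL3_mul hS hS, ← toPGL3_one]
    congr 1
    ext i j; fin_cases i <;> fin_cases j <;> simp [Sw]
  · rw [eq_inv_iff_mul_eq_one, ← toPGL3_mul hS hD, ← toPGL3_mul hSD hS, ← toPGL3_mul hSDS hD,
      ← toPGL3_one]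
    congr 1
    have hDE : Dg ζ = !![1, 0, 0; 0, ζ, 0; 0, 0, ζ ^ 2] := by
      ext i j; fin_cases i <;> fin_cases j <;> simp [Dg]
    rw [hDE]
    ext i j; fin_cases i <;> fin_cases j <;>
      simp [Sw]
    · linear_combination hz3
    · linear_combination hz3
  · intro h
    rw [← toPGL3_one] at h
    obtain ⟨c, hc⟩ := toPGL3_inj (by simp) hD h.symm
    have h0 := congrFun (congrFun hc 0) 0
    have h1 := congrFun (congrFun hc 1) 1
    simp [Dg] at h0 h1
    rw [← h0] at h1
    exact hζ.ne_one (by norm_num) h1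
  · intro n h
    rw [← toPGL3_pow hD, Dg_pow] at h
    obtain ⟨c, hc⟩ := toPGL3_inj (det_Dg (pow_ne_zero _ hζ0)) hS h.symm
    have h0 := congrFun (congrFun hc 1) 2
    simp [Dg, Sw] at h0

theorem conj_iff [CharZero K] {b d g b' d' g' : K} (hb : b ≠ 0) (hd : d ≠ 0) (hg : g ≠ 0)
    (ht1 : b*d*g ≠ -1) (ht8 : b*d*g ≠ 8) (hb' : b' ≠ 0) :
    PGLConj (fq b d g) (fq b' d' g') ↔
        (b' = b ∧ d' = d ∧ g' = g) ∨ (b' = b ∧ d' = g ∧ g' = d) := by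
  constructor
  · rintro ⟨M, c, hM, hc, h⟩
    obtain ⟨ω, -, h2, ⟨-, h3⟩ | ⟨-, h3⟩⟩ := classify_c hb hd hg ht1 ht8 hb' M hM c hc h
    · exact Or.inl ⟨h2, h3⟩
    · exact Or.inr ⟨h2, h3⟩
  · rintro (⟨rfl, rfl, rfl⟩ | ⟨rfl, rfl, rfl⟩)
    · exact ⟨1, 1, by simp, one_ne_zero, by intro v; simp⟩
    · exact ⟨Sw K, 1, det_Sw, one_ne_zero, by intro v; rw [fq_Sw, one_smul]⟩

end final

theorem stmt19 {K : Type*} [Field K] [IsAlgClosed K] [CharZero K]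
    (ζ : K) (hζ : IsPrimitiveRoot ζ 3) :
    let f : K → K → K → (Fin 3 → K) → (Fin 3 → K) := fun b d g v =>
      ![v 0 ^ 2 + b * (v 1 * v 2), v 2 ^ 2 + d * (v 0 * v 1), v 1 ^ 2 + g * (v 0 * v 2)]
    let H3 : Subgroup (PGL3 K) :=
      Subgroup.closure {toPGL3 (Matrix.diagonal ![1, ζ, ζ ^ 2])}
    let H6 : Subgroup (PGL3 K) :=
      Subgroup.closure
        {toPGL3 (Matrix.diagonal ![1, ζ, ζ ^ 2]), toPGL3 !![1,0,0; 0,0,1; 0,1,0]}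
    (∀ b d g : K, b ≠ 0 → d ≠ 0 → g ≠ 0 → b * d * g ≠ -1 → b * d * g ≠ 8 → d ≠ g →
      AutQ (f b d g) = ↑H3 ∧ Nat.card H3 = 3) ∧
    (∀ b d g : K, b ≠ 0 → d ≠ 0 → g ≠ 0 → b * d * g ≠ -1 → b * d * g ≠ 8 → d = g →
      AutQ (f b d g) = ↑H6 ∧ Nat.card H6 = 6 ∧ Nonempty (H6 ≃* Equiv.Perm (Fin 3))) ∧
    (∀ b d g b' d' g' : K, b ≠ 0 → d ≠ 0 → g ≠ 0 → b * d * g ≠ -1 → b * d * g ≠ 8 →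
      b' ≠ 0 → d' ≠ 0 → g' ≠ 0 → b' * d' * g' ≠ -1 → b' * d' * g' ≠ 8 →
      (PGLConj (f b d g) (f b' d' g') ↔
        (b' = b ∧ d' = d ∧ g' = g) ∨ (b' = b ∧ d' = g ∧ g' = d))) := by
  intro f H3 H6
  obtain ⟨x1, x2, x3, x4, x5⟩ := gen_facts hζ
  refine ⟨?_, ?_, ?_⟩
  · intro b d g hb hd hg ht1 ht8 hne
    obtain ⟨hm, hcard⟩ := cdata_closure _ x1 x4
    refine ⟨?_, hcard⟩
    ext z
    refine Iff.trans ?_ (hm z).symm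
    constructor
    · intro hz
      obtain ⟨n, h | ⟨h, -⟩⟩ := aut_forward hζ hb hd hg ht1 ht8 hz
      · exact ⟨n, h⟩
      · exact absurd h hne
    · rintro ⟨n, rfl⟩
      exact Dg_mem hζ b d g n
  · intro b d g hb hd hg ht1 ht8 heq
    obtain ⟨hm, hcard, hiso⟩ := sdata_closure _ _ x1 x2 x3 x4 x5
    refine ⟨?_, hcard, hiso⟩
    subst heq
    ext z
    refine Iff.trans ?_ (hm z).symm
    constructor
    · intro hz
      obtain ⟨n, h | ⟨-, h⟩⟩ := aut_forward hζ hb hd hg ht1 ht8 hz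
      · exact ⟨n, Or.inl h⟩
      · exact ⟨n, Or.inr h⟩
    · rintro ⟨n, rfl | rfl⟩
      · exact Dg_mem hζ b d d n
      · exact Sw_Dg_mem hζ b d n
  · intro b d g b' d' g' hb hd hg ht1 ht8 hb' _ _ _ _
    exact conj_iff hb hd hg ht1 ht8 hb'
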